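/- arXiv:2010.12103 — 2 statements merged into one kernel-verified Lean document; each statement's English description precedes it below -/
import Mathlib

section
/- Let S = (s_1,…,s_m) be m i.i.d. samples from μ and let δ ∈ (0,1). With probability at least 1 − δ over S, R(F,m) ≤ R̂(F,S) + c ln(1/δ)/m + sqrt( (c ln(1/δ)/m)² + 2 c ln(1/δ) R̂(F,S) / m ). -/
open MeasureTheory

noncomputable section

/-- Map a Boolean to a `±1` sign: `true ↦ 1`, `false ↦ -1`. -/
def sgnB (x : Bool) : ℝ := if x then 1 else -1

/-- The `n`-Monte-Carlo Empirical Rademacher Average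
`R̂ⁿ_m(F,S,σ) = (1/n) Σ_j sup_{f∈F} (1/m) Σ_i σ_{j,i} f(s_i)`. -/
def mcera {X ι : Type*} (f : ι → X → ℝ) (n m : ℕ) (S : Fin m → X)
    (σ : Fin n → Fin m → Bool) : ℝ :=
  (n : ℝ)⁻¹ * ∑ j : Fin n, ⨆ l : ι, (m : ℝ)⁻¹ * ∑ k : Fin m, sgnB (σ j k) * f l (S k)

/-- Uniform measure on `n × m` sign matrices: the entries are independent
uniform Rademacher (±1) random variables. -/
def radMeasure (n m : ℕ) : Measure (Fin n → Fin m → Bool) :=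
  (PMF.uniformOfFintype (Fin n → Fin m → Bool)).toMeasure

/-- The Empirical Rademacher Average `R̂(F,S) = E_σ[R̂ⁿ_m(F,S,σ)]`. -/
def era {X ι : Type*} (f : ι → X → ℝ) (n m : ℕ) (S : Fin m → X) : ℝ :=
  ∫ σ, mcera f n m S σ ∂(radMeasure n m)

/-- The Rademacher Complexity `R(F,m) = E_S[R̂(F,S)]`, `S` being `m` i.i.d. samples. -/
def rc {X ι : Type*} [MeasurableSpace X] (f : ι → X → ℝ) (n m : ℕ) (μ : Measure X) : ℝ :=
  ∫ S : Fin m → X, era f n m S ∂(Measure.pi fun _ : Fin m => μ)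

/-- `ẑ(S) = sup_{f∈F, 1≤i≤m} |f(s_i)|`. -/
def zhat {X ι : Type*} (f : ι → X → ℝ) {m : ℕ} (S : Fin m → X) : ℝ :=
  ⨆ p : ι × Fin m, |f p.1 (S p.2)|

/-- `ν̂_F(S) = (1/m) sup_{f∈F} Σ_i |f(s_i)|`. -/
def nuhat {X ι : Type*} (f : ι → X → ℝ) {m : ℕ} (S : Fin m → X) : ℝ :=
  (m : ℝ)⁻¹ * ⨆ l : ι, ∑ k : Fin m, |f l (S k)|

/-- The empirical wimpy variance `σ̂²_F(S) = (1/m) sup_{f∈F} Σ_i f(s_i)²`. -/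
def sigma2hat {X ι : Type*} (f : ι → X → ℝ) {m : ℕ} (S : Fin m → X) : ℝ :=
  (m : ℝ)⁻¹ * ⨆ l : ι, ∑ k : Fin m, (f l (S k)) ^ 2

/-- The wimpy variance `σ²_F = sup_{f∈F} E_μ[f²]`. -/
def wimpyVar {X ι : Type*} [MeasurableSpace X] (f : ι → X → ℝ) (μ : Measure X) : ℝ :=
  ⨆ l : ι, ∫ x, (f l x) ^ 2 ∂μ

/-- The positive supremum deviation `SD⁺(F,S) = sup_{f∈F} ((1/m)Σ_i f(s_i) - E_μ[f])`. -/
def sdPlus {X ι : Type*} [MeasurableSpace X] (f : ι → X → ℝ) (μ : Measure X)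
    {m : ℕ} (S : Fin m → X) : ℝ :=
  ⨆ l : ι, ((m : ℝ)⁻¹ * ∑ k : Fin m, f l (S k) - ∫ x, f l x ∂μ)

/-- The negative supremum deviation `SD⁻(F,S) = sup_{f∈F} (E_μ[f] - (1/m)Σ_i f(s_i))`. -/
def sdMinus {X ι : Type*} [MeasurableSpace X] (f : ι → X → ℝ) (μ : Measure X)
    {m : ℕ} (S : Fin m → X) : ℝ :=
  ⨆ l : ι, ((∫ x, f l x ∂μ) - (m : ℝ)⁻¹ * ∑ k : Fin m, f l (S k))

/-- `η_F = sup_{f∈F} E_μ[f] - a`. -/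
def etaF {X ι : Type*} [MeasurableSpace X] (f : ι → X → ℝ) (μ : Measure X) (a : ℝ) : ℝ :=
  (⨆ l : ι, ∫ x, f l x ∂μ) - a

/-- `γ_F = b - inf_{f∈F} E_μ[f]`. -/
def gammaF {X ι : Type*} [MeasurableSpace X] (f : ι → X → ℝ) (μ : Measure X) (b : ℝ) : ℝ :=
  b - ⨅ l : ι, ∫ x, f l x ∂μ

/-- `η̂_F(S) = sup_{f∈F} (1/m) Σ_i f(s_i) - a`. -/
def etahat {X ι : Type*} (f : ι → X → ℝ) {m : ℕ} (S : Fin m → X) (a : ℝ) : ℝ :=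
  (⨆ l : ι, (m : ℝ)⁻¹ * ∑ k : Fin m, f l (S k)) - a

/-- `γ̂_F(S) = b - sup_{f∈F} (1/m) Σ_i f(s_i)`. -/
def gammahat {X ι : Type*} (f : ι → X → ℝ) {m : ℕ} (S : Fin m → X) (b : ℝ) : ℝ :=
  b - ⨆ l : ι, (m : ℝ)⁻¹ * ∑ k : Fin m, f l (S k)

/-- `h(x) = (1+x) ln(1+x) - x`. -/
def hfun (x : ℝ) : ℝ := (1 + x) * Real.log (1 + x) - x

/-- `g(σ) = n m R̂ⁿ_m(F,S,σ) = Σ_j sup_{f∈F} Σ_i σ_{j,i} f(s_i)`. -/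
def gup {X ι : Type*} (f : ι → X → ℝ) {n m : ℕ} (S : Fin m → X)
    (σ : Fin n → Fin m → Bool) : ℝ :=
  ∑ j : Fin n, ⨆ l : ι, ∑ k : Fin m, sgnB (σ j k) * f l (S k)

/-- `g_{j,i}(σ)`: infimum over `σ'_{j,i} ∈ {-1,1}` of `g` evaluated at `σ` with its
`(j,i)` entry replaced by `σ'_{j,i}`. -/
def gji {X ι : Type*} (f : ι → X → ℝ) {n m : ℕ} (S : Fin m → X)
    (σ : Fin n → Fin m → Bool) (j : Fin n) (i : Fin m) : ℝ :=
  min (gup f S (Function.update σ j (Function.update (σ j) i true)))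
      (gup f S (Function.update σ j (Function.update (σ j) i false)))

/-- `g(S) = m SD⁺(F,S) = sup_{f∈F} (Σ_i f(s_i) - m E_μ[f])`. -/
def gSDp {X ι : Type*} [MeasurableSpace X] (f : ι → X → ℝ) (μ : Measure X)
    {m : ℕ} (S : Fin m → X) : ℝ :=
  ⨆ l : ι, (∑ k : Fin m, f l (S k) - m * ∫ x, f l x ∂μ)

/-- `g_i(S) = inf_{s'_i ∈ X} g(s_1,…,s_{i-1},s'_i,s_{i+1},…,s_m)` for `g = m SD⁺`. -/
def gSDpi {X ι : Type*} [MeasurableSpace X] (f : ι → X → ℝ) (μ : Measure X)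
    {m : ℕ} (S : Fin m → X) (i : Fin m) : ℝ :=
  ⨅ s' : X, gSDp f μ (Function.update S i s')

/-- `g(S) = m SD⁻(F,S) = sup_{f∈F} (m E_μ[f] - Σ_i f(s_i))`. -/
def gSDm {X ι : Type*} [MeasurableSpace X] (f : ι → X → ℝ) (μ : Measure X)
    {m : ℕ} (S : Fin m → X) : ℝ :=
  ⨆ l : ι, ((m : ℝ) * (∫ x, f l x ∂μ) - ∑ k : Fin m, f l (S k))

/-- `g_i(S) = inf_{s'_i ∈ X} g(s_1,…,s_{i-1},s'_i,s_{i+1},…,s_m)` for `g = m SD⁻`. -/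
def gSDmi {X ι : Type*} [MeasurableSpace X] (f : ι → X → ℝ) (μ : Measure X)
    {m : ℕ} (S : Fin m → X) (i : Fin m) : ℝ :=
  ⨅ s' : X, gSDm f μ (Function.update S i s')

/-- `g(S) = m σ̂²_F(S) = sup_{f∈F} Σ_i f(s_i)²`. -/
def gWv {X ι : Type*} (f : ι → X → ℝ) {m : ℕ} (S : Fin m → X) : ℝ :=
  ⨆ l : ι, ∑ k : Fin m, (f l (S k)) ^ 2

/-- `g_j(S) = sup_{f∈F} Σ_{i≠j} f(s_i)²`. -/
def gWvj {X ι : Type*} (f : ι → X → ℝ) {m : ℕ} (S : Fin m → X) (j : Fin m) : ℝ :=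
  ⨆ l : ι, ∑ k ∈ Finset.univ.erase j, (f l (S k)) ^ 2

/-!
Let `R(S)` be `m` times the empirical Rademacher average. Averaging over the sign of a single
coordinate shows that deleting the coordinate does not increase `R` (Jensen) and decreases it by at
most half the oscillation `2 * c` of the family, while summing the leave-one-out sums
`∑ k ≠ i, σ k * f (s k)` over `i` shows that the `m` decreases add up to at most `R`. So `Z = R / c`
is self-bounding, and the entropy method applies. Tensorization, together with the formula for the
entropy as an infimum of Bregman divergences, gives `(1 - exp (-l)) * K' l ≤ K l` for the cumulant
generating function `K` of `Z`. This says exactly that `K l / (exp l - 1)` is nonincreasing, so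
`K l ≤ (exp l - 1) * E[Z]`, and the lower Poisson tail gives `E[Z] ≤ Z + √(2 * L * E[Z])` with
probability at least `1 - exp (-L)`. Solving this quadratic inequality for `E[Z]` yields the bound.
-/

section BoundedMeasurable

variable {Ω Ω' : Type*} [MeasurableSpace Ω] [MeasurableSpace Ω']

/-- Bounded measurable real functions: a class closed under all the operations of the entropy
method, on which integrability is automatic. -/
structure BddMeasurable (h : Ω → ℝ) : Prop where
  measurable : Measurable h
  exists_abs_le : ∃ C, ∀ ω, |h ω| ≤ C

/-- Measurable functions with values in a compact subinterval of `(0, ∞)`, so that the function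
and its logarithm are both bounded. -/
structure PosBddMeasurable (h : Ω → ℝ) : Prop extends BddMeasurable h where
  exists_pos_le : ∃ ε > 0, ∀ ω, ε ≤ h ω

namespace BddMeasurable

variable {g h : Ω → ℝ}

lemma integrable (hh : BddMeasurable h) (P : Measure Ω) [IsFiniteMeasure P] : Integrable h P :=
  let ⟨C, hC⟩ := hh.exists_abs_le
  .of_bound hh.measurable.aestronglyMeasurable C (.of_forall hC)

lemma const (r : ℝ) : BddMeasurable fun _ : Ω => r :=
  ⟨measurable_const, |r|, fun _ => le_rfl⟩

lemma sub (hg : BddMeasurable g) (hh : BddMeasurable h) : BddMeasurable fun ω => g ω - h ω := by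
  obtain ⟨C, hC⟩ := hg.exists_abs_le
  obtain ⟨D, hD⟩ := hh.exists_abs_le
  exact ⟨hg.measurable.sub hh.measurable, C + D,
    fun ω => (abs_sub _ _).trans (add_le_add (hC ω) (hD ω))⟩

lemma add (hg : BddMeasurable g) (hh : BddMeasurable h) : BddMeasurable fun ω => g ω + h ω := by
  obtain ⟨C, hC⟩ := hg.exists_abs_le
  obtain ⟨D, hD⟩ := hh.exists_abs_le
  exact ⟨hg.measurable.add hh.measurable, C + D,
    fun ω => (abs_add_le _ _).trans (add_le_add (hC ω) (hD ω))⟩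

lemma mul (hg : BddMeasurable g) (hh : BddMeasurable h) : BddMeasurable fun ω => g ω * h ω := by
  obtain ⟨C, hC⟩ := hg.exists_abs_le
  obtain ⟨D, hD⟩ := hh.exists_abs_le
  refine ⟨hg.measurable.mul hh.measurable, C * D, fun ω => ?_⟩
  rw [abs_mul]
  exact mul_le_mul (hC ω) (hD ω) (abs_nonneg _) ((abs_nonneg _).trans (hC ω))

lemma const_mul (hh : BddMeasurable h) (r : ℝ) : BddMeasurable fun ω => r * h ω :=
  (const r).mul hh

lemma comp (hh : BddMeasurable h) {φ : Ω' → Ω} (hφ : Measurable φ) :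
    BddMeasurable fun ω => h (φ ω) :=
  let ⟨C, hC⟩ := hh.exists_abs_le
  ⟨hh.measurable.comp hφ, C, fun ω => hC (φ ω)⟩

lemma exp (hh : BddMeasurable h) : PosBddMeasurable fun ω => Real.exp (h ω) := by
  obtain ⟨C, hC⟩ := hh.exists_abs_le
  refine ⟨⟨hh.measurable.exp, Real.exp C, fun ω => ?_⟩, Real.exp (-C), Real.exp_pos _,
    fun ω => Real.exp_le_exp.2 (abs_le.1 (hC ω)).1⟩
  rw [Real.abs_exp]
  exact Real.exp_le_exp.2 (abs_le.1 (hC ω)).2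

lemma integral_prod_right {h : Ω × Ω' → ℝ} (hh : BddMeasurable h) (Q : Measure Ω')
    [IsProbabilityMeasure Q] : BddMeasurable fun x => ∫ y, h (x, y) ∂Q := by
  obtain ⟨C, hC⟩ := hh.exists_abs_le
  refine ⟨hh.measurable.stronglyMeasurable.integral_prod_right'.measurable, C, fun x => ?_⟩
  simpa using norm_integral_le_of_norm_le_const (μ := Q) (f := fun y => h (x, y)) (C := C)
    (.of_forall fun y => hC (x, y))

end BddMeasurable

namespace PosBddMeasurable

variable {h : Ω → ℝ}

lemma pos (hh : PosBddMeasurable h) (ω : Ω) : 0 < h ω :=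
  let ⟨_, hε, hl⟩ := hh.exists_pos_le
  hε.trans_le (hl ω)

lemma log (hh : PosBddMeasurable h) : BddMeasurable fun ω => Real.log (h ω) := by
  obtain ⟨C, hC⟩ := hh.exists_abs_le
  obtain ⟨ε, hε, hl⟩ := hh.exists_pos_le
  exact ⟨hh.measurable.log, max |Real.log ε| |Real.log C|, fun ω => abs_le_max_abs_abs
    (Real.log_le_log hε (hl ω)) (Real.log_le_log (hh.pos ω) ((le_abs_self _).trans (hC ω)))⟩

lemma mul_log (hh : PosBddMeasurable h) : BddMeasurable fun ω => h ω * Real.log (h ω) :=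
  hh.toBddMeasurable.mul hh.log

lemma const_mul (hh : PosBddMeasurable h) {r : ℝ} (hr : 0 < r) :
    PosBddMeasurable fun ω => r * h ω :=
  let ⟨ε, hε, hl⟩ := hh.exists_pos_le
  ⟨hh.toBddMeasurable.const_mul r, r * ε, mul_pos hr hε,
    fun ω => mul_le_mul_of_nonneg_left (hl ω) hr.le⟩

lemma comp (hh : PosBddMeasurable h) {φ : Ω' → Ω} (hφ : Measurable φ) :
    PosBddMeasurable fun ω => h (φ ω) :=
  let ⟨ε, hε, hl⟩ := hh.exists_pos_le
  ⟨hh.toBddMeasurable.comp hφ, ε, hε, fun ω => hl (φ ω)⟩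

lemma le_integral (hh : PosBddMeasurable h) {ε : ℝ} (hl : ∀ ω, ε ≤ h ω) (P : Measure Ω)
    [IsProbabilityMeasure P] : ε ≤ ∫ ω, h ω ∂P := by
  simpa using integral_mono (integrable_const ε) (hh.integrable P) hl

lemma integral_pos (hh : PosBddMeasurable h) (P : Measure Ω) [IsProbabilityMeasure P] :
    0 < ∫ ω, h ω ∂P :=
  let ⟨_, hε, hl⟩ := hh.exists_pos_le
  hε.trans_le (hh.le_integral hl P)

lemma integral_prod_right {h : Ω × Ω' → ℝ} (hh : PosBddMeasurable h) (Q : Measure Ω')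
    [IsProbabilityMeasure Q] : PosBddMeasurable fun x => ∫ y, h (x, y) ∂Q :=
  let ⟨ε, hε, hl⟩ := hh.exists_pos_le
  ⟨hh.toBddMeasurable.integral_prod_right Q, ε, hε, fun x =>
    (hh.comp measurable_prodMk_left).le_integral (fun y => hl (x, y)) Q⟩

end PosBddMeasurable

end BoundedMeasurable

section Entropy

variable {Ω Ω' : Type*} [MeasurableSpace Ω] [MeasurableSpace Ω']

/-- The entropy functional `Ent(T) = E[T log T] - E[T] log E[T]` of a positive function `T`. -/
def entropy (P : Measure Ω) (T : Ω → ℝ) : ℝ :=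
  ∫ ω, T ω * Real.log (T ω) ∂P - (∫ ω, T ω ∂P) * Real.log (∫ ω, T ω ∂P)

/-- The Bregman divergence of `t ↦ t log t`, the integrand of the variational formulas for the
entropy. -/
def logBregman (t u : ℝ) : ℝ := t * Real.log t - t * Real.log u - t + u

lemma logBregman_nonneg {t u : ℝ} (ht : 0 < t) (hu : 0 < u) : 0 ≤ logBregman t u := by
  have hlog : Real.log u - Real.log t ≤ u / t - 1 := by
    rw [← Real.log_div hu.ne' ht.ne']
    exact Real.log_le_sub_one_of_pos (div_pos hu ht)
  have hmul := mul_le_mul_of_nonneg_left hlog ht.le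
  rw [mul_sub, mul_sub, mul_div_cancel₀ _ ht.ne'] at hmul
  unfold logBregman
  linarith

lemma BddMeasurable.logBregman {T U : Ω → ℝ} (hT : PosBddMeasurable T) (hU : PosBddMeasurable U) :
    BddMeasurable fun ω => logBregman (T ω) (U ω) :=
  ((hT.mul_log.sub (hT.toBddMeasurable.mul hU.log)).sub hT.toBddMeasurable).add hU.toBddMeasurable

lemma integral_logBregman (P : Measure Ω) [IsFiniteMeasure P] {T U : Ω → ℝ}
    (hT : PosBddMeasurable T) (hU : PosBddMeasurable U) :
    ∫ ω, logBregman (T ω) (U ω) ∂P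
      = ∫ ω, T ω * Real.log (T ω) ∂P - ∫ ω, T ω * Real.log (U ω) ∂P - ∫ ω, T ω ∂P
        + ∫ ω, U ω ∂P := by
  have hTU := hT.toBddMeasurable.mul hU.log
  have hsub := hT.mul_log.sub hTU
  unfold logBregman
  rw [integral_add ((hsub.sub hT.toBddMeasurable).integrable P) (hU.integrable P),
    integral_sub (hsub.integrable P) (hT.integrable P),
    integral_sub (hT.mul_log.integrable P) (hTU.integrable P)]

lemma entropy_le_integral_logBregman (P : Measure Ω) [IsProbabilityMeasure P] {T : Ω → ℝ}
    (hT : PosBddMeasurable T) {u : ℝ} (hu : 0 < u) :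
    entropy P T ≤ ∫ ω, logBregman (T ω) u ∂P := by
  have hmean : 0 ≤ logBregman (∫ ω, T ω ∂P) u := logBregman_nonneg (hT.integral_pos P) hu
  rw [integral_logBregman P hT ⟨.const u, u, hu, fun _ => le_rfl⟩, integral_mul_const,
    integral_const, probReal_univ, one_smul]
  unfold logBregman at hmean
  unfold entropy
  linarith

/-- Gibbs' variational principle; the term `log E[U]` makes it homogeneous in `U`. -/
lemma integral_mul_log_le_entropy_add (P : Measure Ω) [IsProbabilityMeasure P] {T U : Ω → ℝ}
    (hT : PosBddMeasurable T) (hU : PosBddMeasurable U) :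
    ∫ ω, T ω * Real.log (U ω) ∂P
      ≤ entropy P T + (∫ ω, T ω ∂P) * Real.log (∫ ω, U ω ∂P) := by
  have hMpos := hT.integral_pos P
  have hNpos := hU.integral_pos P
  set M := ∫ ω, T ω ∂P with hM
  set N := ∫ ω, U ω ∂P with hN
  have hV : PosBddMeasurable fun ω => M / N * U ω := hU.const_mul (div_pos hMpos hNpos)
  have hnonneg : 0 ≤ ∫ ω, logBregman (T ω) (M / N * U ω) ∂P :=
    integral_nonneg fun ω => logBregman_nonneg (hT.pos ω) (hV.pos ω)
  have hlog : ∫ ω, T ω * Real.log (M / N * U ω) ∂P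
      = M * (Real.log M - Real.log N) + ∫ ω, T ω * Real.log (U ω) ∂P := by
    simp_rw [fun ω => Real.log_mul (div_pos hMpos hNpos).ne' (hU.pos ω).ne', mul_add]
    rw [integral_add ((hT.toBddMeasurable.mul (.const _)).integrable P)
      ((hT.toBddMeasurable.mul hU.log).integrable P), integral_mul_const,
      Real.log_div hMpos.ne' hNpos.ne']
  rw [integral_logBregman P hT hV, hlog, integral_const_mul, ← hM, ← hN,
    div_mul_cancel₀ _ hNpos.ne'] at hnonneg
  unfold entropy
  linarith

lemma BddMeasurable.entropy_prod_right {T : Ω × Ω' → ℝ} (hT : PosBddMeasurable T) (Q : Measure Ω')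
    [IsProbabilityMeasure Q] : BddMeasurable fun x => entropy Q fun y => T (x, y) :=
  (hT.mul_log.integral_prod_right Q).sub (hT.integral_prod_right Q).mul_log

lemma entropy_prod (P : Measure Ω) [IsProbabilityMeasure P] (Q : Measure Ω')
    [IsProbabilityMeasure Q] {T : Ω × Ω' → ℝ} (hT : PosBddMeasurable T) :
    entropy (P.prod Q) T
      = ∫ x, entropy Q (fun y => T (x, y)) ∂P + entropy P fun x => ∫ y, T (x, y) ∂Q := by
  unfold entropy
  rw [integral_sub ((hT.mul_log.integral_prod_right Q).integrable P)
      ((hT.integral_prod_right Q).mul_log.integrable P),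
    integral_prod _ (hT.mul_log.integrable _), integral_prod _ (hT.integrable _)]
  ring

lemma entropy_integral_le_integral_entropy (P : Measure Ω) [IsProbabilityMeasure P]
    (Q : Measure Ω') [IsProbabilityMeasure Q] {T : Ω × Ω' → ℝ} (hT : PosBddMeasurable T) :
    entropy P (fun x => ∫ y, T (x, y) ∂Q) ≤ ∫ y, entropy P (fun x => T (x, y)) ∂Q := by
  have hM : PosBddMeasurable fun x => ∫ y, T (x, y) ∂Q := hT.integral_prod_right Q
  have hTswap : PosBddMeasurable fun p : Ω' × Ω => T (p.2, p.1) := hT.comp measurable_swap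
  set M : Ω → ℝ := fun x => ∫ y, T (x, y) ∂Q with hMdef
  have hTM : BddMeasurable fun p : Ω × Ω' => T p * Real.log (M p.1) :=
    hT.toBddMeasurable.mul (hM.log.comp measurable_fst)
  have hswap : ∫ x, M x * Real.log (M x) ∂P = ∫ y, ∫ x, T (x, y) * Real.log (M x) ∂P ∂Q := by
    rw [← integral_prod_symm _ (hTM.integrable _), integral_prod _ (hTM.integrable _)]
    simp only [integral_mul_const, hMdef]
  have htotal : ∫ x, M x ∂P = ∫ y, ∫ x, T (x, y) ∂P ∂Q := by
    rw [← integral_prod_symm _ (hT.integrable _), integral_prod _ (hT.integrable _)]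
  have hEnt := (BddMeasurable.entropy_prod_right hTswap P).integrable Q
  have hMean := ((hTswap.toBddMeasurable.integral_prod_right P).mul
    (.const (Real.log (∫ x, M x ∂P)))).integrable Q
  have hgibbs : ∫ y, ∫ x, T (x, y) * Real.log (M x) ∂P ∂Q
      ≤ ∫ y, (entropy P (fun x => T (x, y))
        + (∫ x, T (x, y) ∂P) * Real.log (∫ x, M x ∂P)) ∂Q :=
    integral_mono (((hTM.comp measurable_swap).integral_prod_right P).integrable Q)
      (hEnt.add hMean) fun y =>
        integral_mul_log_le_entropy_add P (hT.comp measurable_prodMk_right) hM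
  rw [integral_add hEnt hMean, integral_mul_const, ← htotal, ← hswap] at hgibbs
  rw [entropy]
  linarith

lemma entropy_prod_le (P : Measure Ω) [IsProbabilityMeasure P] (Q : Measure Ω')
    [IsProbabilityMeasure Q] {T : Ω × Ω' → ℝ} (hT : PosBddMeasurable T) :
    entropy (P.prod Q) T
      ≤ ∫ y, entropy P (fun x => T (x, y)) ∂Q + ∫ x, entropy Q (fun y => T (x, y)) ∂P := by
  rw [entropy_prod P Q hT, add_comm]
  gcongr
  exact entropy_integral_le_integral_entropy P Q hT

end Entropy

section Tensorization

lemma measurePreserving_update {κ : Type*} [Fintype κ] [DecidableEq κ] {X : κ → Type*}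
    [∀ i, MeasurableSpace (X i)] (μ : ∀ i, Measure (X i)) [∀ i, IsProbabilityMeasure (μ i)]
    (i : κ) :
    MeasurePreserving (fun p : (∀ j, X j) × X i => Function.update p.1 i p.2)
      ((Measure.pi μ).prod (μ i)) (Measure.pi μ) := by
  refine ⟨measurable_update', (Measure.pi_eq fun s hs => ?_).symm⟩
  have hpre : (fun p : (∀ j, X j) × X i => Function.update p.1 i p.2) ⁻¹' Set.univ.pi s
      = Set.univ.pi (Function.update s i Set.univ) ×ˢ s i := by
    ext p
    simp [Function.forall_update_iff p.1 fun j x => x ∈ s j,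
      Function.forall_update_iff s fun j t => p.1 j ∈ t, and_comm]
  rw [Measure.map_apply measurable_update' (.univ_pi hs), hpre, Measure.prod_prod, Measure.pi_pi,
    ← Finset.prod_erase_mul _ _ (Finset.mem_univ i),
    ← Finset.prod_erase_mul _ _ (Finset.mem_univ i), Function.update_self, measure_univ, mul_one]
  congr 1
  exact Finset.prod_congr rfl fun j hj => by rw [Function.update_of_ne (Finset.ne_of_mem_erase hj)]

lemma measurePreserving_finCons {m : ℕ} {X : Fin (m + 1) → Type*} [∀ i, MeasurableSpace (X i)]
    (μ : ∀ i, Measure (X i)) [∀ i, SigmaFinite (μ i)] :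
    MeasurePreserving (fun p : X 0 × (∀ i : Fin m, X i.succ) => (Fin.cons p.1 p.2 : ∀ i, X i))
      ((μ 0).prod (Measure.pi fun i => μ i.succ)) (Measure.pi μ) := by
  have hcons : (fun p : X 0 × (∀ i : Fin m, X i.succ) => (Fin.cons p.1 p.2 : ∀ i, X i))
      = (MeasurableEquiv.piFinSuccAbove X 0).symm := by
    funext p
    rw [MeasurableEquiv.piFinSuccAbove_symm_apply, Fin.insertNthEquiv_zero]
    rfl
  rw [hcons]
  exact (measurePreserving_piFinSuccAbove μ 0).symm

variable {Ω Ω' : Type*} [MeasurableSpace Ω] [MeasurableSpace Ω']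

lemma integral_comp_measurePreserving {E : Type*} [NormedAddCommGroup E] [NormedSpace ℝ E]
    {P : Measure Ω} {Q : Measure Ω'} {φ : Ω → Ω'} (hφ : MeasurePreserving φ P Q) {h : Ω' → E}
    (hh : AEStronglyMeasurable h Q) : ∫ ω, h (φ ω) ∂P = ∫ ω, h ω ∂Q := by
  rw [← hφ.map_eq] at hh ⊢
  exact (integral_map hφ.measurable.aemeasurable hh).symm

lemma entropy_comp_measurePreserving {P : Measure Ω} {Q : Measure Ω'} {φ : Ω → Ω'}
    (hφ : MeasurePreserving φ P Q) {T : Ω' → ℝ} (hT : Measurable T) :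
    entropy P (fun ω => T (φ ω)) = entropy Q T := by
  have hTlog : Measurable fun ω => T ω * Real.log (T ω) := hT.mul hT.log
  simp only [entropy, integral_comp_measurePreserving hφ hT.aestronglyMeasurable,
    integral_comp_measurePreserving hφ hTlog.aestronglyMeasurable]

variable {m : ℕ} {X : Fin m → Type*} [∀ i, MeasurableSpace (X i)] (μ : ∀ i, Measure (X i))
  [∀ i, IsProbabilityMeasure (μ i)] {T : (∀ i, X i) → ℝ}

lemma BddMeasurable.entropy_update (hT : PosBddMeasurable T) (i : Fin m) :
    BddMeasurable fun S => entropy (μ i) fun x => T (Function.update S i x) :=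
  .entropy_prod_right (hT.comp measurable_update') (μ i)

lemma entropy_pi_le (hT : PosBddMeasurable T) :
    entropy (Measure.pi μ) T
      ≤ ∑ i, ∫ S, entropy (μ i) (fun x => T (Function.update S i x)) ∂(Measure.pi μ) := by
  induction m with
  | zero =>
    rw [entropy, Measure.pi_of_empty]
    simp
  | succ m ih =>
    set ν := Measure.pi fun i : Fin m => μ i.succ
    have hcons : MeasurePreserving (fun p : X 0 × (∀ i : Fin m, X i.succ) =>
        (Fin.cons p.1 p.2 : ∀ i, X i)) ((μ 0).prod ν) (Measure.pi μ) := measurePreserving_finCons μ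
    have hTcons := hT.comp hcons.measurable
    have hEnt := fun i => (BddMeasurable.entropy_update μ hT i).comp hcons.measurable
    have hcoord : ∀ i, ∫ S, entropy (μ i) (fun x => T (Function.update S i x)) ∂(Measure.pi μ)
        = ∫ x, ∫ y, entropy (μ i) (fun z => T (Function.update (Fin.cons x y) i z)) ∂ν ∂(μ 0) :=
      fun i => by
        rw [← integral_comp_measurePreserving hcons
          (BddMeasurable.entropy_update μ hT i).measurable.aestronglyMeasurable,
          integral_prod _ ((hEnt i).integrable _)]
    have htail : ∀ x, entropy ν (fun y => T (Fin.cons x y))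
        ≤ ∑ i : Fin m, ∫ y, entropy (μ i.succ)
          (fun z => T (Function.update (Fin.cons x y) i.succ z)) ∂ν := fun x => by
      simp only [← Fin.cons_update]
      exact ih (fun i => μ i.succ) (hTcons.comp measurable_prodMk_left)
    have hInt := fun i : Fin m => ((hEnt i.succ).integral_prod_right ν).integrable (μ 0)
    calc entropy (Measure.pi μ) T
      _ = entropy ((μ 0).prod ν) fun p => T (Fin.cons p.1 p.2) :=
        (entropy_comp_measurePreserving hcons hT.measurable).symm
      _ ≤ ∫ y, entropy (μ 0) (fun x => T (Fin.cons x y)) ∂ν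
          + ∫ x, entropy ν (fun y => T (Fin.cons x y)) ∂(μ 0) := entropy_prod_le _ _ hTcons
      _ ≤ ∫ y, entropy (μ 0) (fun x => T (Fin.cons x y)) ∂ν
          + ∫ x, ∑ i : Fin m, ∫ y, entropy (μ i.succ)
            (fun z => T (Function.update (Fin.cons x y) i.succ z)) ∂ν ∂(μ 0) :=
        add_le_add le_rfl (integral_mono ((BddMeasurable.entropy_prod_right hTcons ν).integrable _)
          (integrable_finsetSum _ fun i _ => hInt i) htail)
      _ = _ := by
        simp only [Fin.sum_univ_succ, hcoord, Fin.update_cons_zero, integral_const, probReal_univ,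
          one_smul, integral_finsetSum _ fun i _ => hInt i]

lemma entropy_pi_le_sum_integral_logBregman (hT : PosBddMeasurable T)
    {U : Fin m → (∀ i, X i) → ℝ} (hU : ∀ i, PosBddMeasurable (U i))
    (hUi : ∀ i S x, U i (Function.update S i x) = U i S) :
    entropy (Measure.pi μ) T ≤ ∑ i, ∫ S, logBregman (T S) (U i S) ∂(Measure.pi μ) := by
  refine (entropy_pi_le μ hT).trans (Finset.sum_le_sum fun i _ => ?_)
  have hTupd : PosBddMeasurable fun p : (∀ j, X j) × X i => T (Function.update p.1 i p.2) :=
    hT.comp measurable_update'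
  have hTU := BddMeasurable.logBregman hT (hU i)
  have hTUupd : BddMeasurable fun p : (∀ j, X j) × X i =>
      logBregman (T (Function.update p.1 i p.2)) (U i p.1) := by
    simpa only [hUi] using hTU.comp (φ := fun p : (∀ j, X j) × X i => Function.update p.1 i p.2)
      measurable_update'
  have hresample : ∫ S, logBregman (T S) (U i S) ∂(Measure.pi μ)
      = ∫ S, ∫ x, logBregman (T (Function.update S i x)) (U i S) ∂(μ i) ∂(Measure.pi μ) := by
    rw [← integral_comp_measurePreserving (measurePreserving_update μ i)
      hTU.measurable.aestronglyMeasurable]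
    simp only [hUi]
    exact integral_prod _ (hTUupd.integrable _)
  rw [hresample]
  exact integral_mono ((BddMeasurable.entropy_update μ hT i).integrable _)
    ((hTUupd.integral_prod_right (μ i)).integrable _) fun S =>
      entropy_le_integral_logBregman (μ i) (hTupd.comp measurable_prodMk_left) ((hU i).pos S)

end Tensorization

section SelfBounding

/-- A function `Z` of independent coordinates is self-bounding with comparison functions `V i`:
`V i` does not depend on the `i`-th coordinate, `0 ≤ Z - V i ≤ 1`, and `∑ i, (Z - V i) ≤ Z`. -/
structure IsSelfBounding {m : ℕ} {X : Fin m → Type*} [∀ i, MeasurableSpace (X i)]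
    (Z : (∀ i, X i) → ℝ) (V : Fin m → (∀ i, X i) → ℝ) : Prop where
  bddMeasurable : BddMeasurable Z
  measurable_left : ∀ i, Measurable (V i)
  update_eq : ∀ i S x, V i (Function.update S i x) = V i S
  le : ∀ i S, V i S ≤ Z S
  le_add_one : ∀ i S, Z S ≤ V i S + 1
  sum_sub_le : ∀ S, ∑ i, (Z S - V i S) ≤ Z S

lemma antitone_dslope_div_dslope_exp {K : ℝ → ℝ} (hK : Differentiable ℝ K) (hK0 : K 0 = 0)
    (hineq : ∀ x, (1 - Real.exp (-x)) * deriv K x ≤ K x) :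
    Antitone fun x => dslope K 0 x / dslope Real.exp 0 x := by
  have hexp_ne : ∀ x ≠ 0, Real.exp x - 1 ≠ 0 := fun x hx => by
    rwa [sub_ne_zero, Ne, Real.exp_eq_one_iff]
  have hdslope_ne : ∀ x, dslope Real.exp 0 x ≠ 0 := fun x => by
    rcases eq_or_ne x 0 with rfl | hx
    · simp
    · simp [dslope_of_ne _ hx, slope_def_field, hexp_ne x hx, hx]
  have hcont : Continuous fun x => dslope K 0 x / dslope Real.exp 0 x := by
    refine .div ?_ ?_ hdslope_ne
    · rw [← continuousOn_univ, continuousOn_dslope Filter.univ_mem]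
      exact ⟨hK.continuous.continuousOn, hK 0⟩
    · rw [← continuousOn_univ, continuousOn_dslope Filter.univ_mem]
      exact ⟨Real.continuous_exp.continuousOn, Real.differentiableAt_exp⟩
  have hderiv : ∀ x ≠ 0, HasDerivAt (fun x => dslope K 0 x / dslope Real.exp 0 x)
      ((deriv K x * (Real.exp x - 1) - K x * Real.exp x) / (Real.exp x - 1) ^ 2) x := by
    intro x hx
    refine ((hK x).hasDerivAt.div ((Real.hasDerivAt_exp x).sub_const 1)
      (hexp_ne x hx)).congr_of_eventuallyEq ?_
    filter_upwards [eventually_ne_nhds hx] with y hy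
    simp only [dslope_of_ne _ hy, slope_def_field, hK0, sub_zero, Real.exp_zero, Pi.div_apply]
    exact div_div_div_cancel_right₀ hy _ _
  have hderiv_nonpos : ∀ x ≠ 0, deriv (fun x => dslope K 0 x / dslope Real.exp 0 x) x ≤ 0 := by
    intro x hx
    rw [(hderiv x hx).deriv]
    refine div_nonpos_of_nonpos_of_nonneg ?_ (sq_nonneg _)
    have hmul := mul_le_mul_of_nonneg_left (hineq x) (Real.exp_pos x).le
    have hinv : Real.exp x * Real.exp (-x) = 1 := by rw [← Real.exp_add]; simp
    linear_combination hmul + deriv K x * hinv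
  have hanti : ∀ s : Set ℝ, Convex ℝ s → 0 ∉ interior s →
      AntitoneOn (fun x => dslope K 0 x / dslope Real.exp 0 x) s := fun s hs h0 =>
    antitoneOn_of_deriv_nonpos hs hcont.continuousOn
      (fun x hx => (hderiv x fun h => h0 (h ▸ hx)).differentiableAt.differentiableWithinAt)
      fun x hx => hderiv_nonpos x fun h => h0 (h ▸ hx)
  exact (hanti _ (convex_Iic 0) (by simp)).Iic_union_Ici (hanti _ (convex_Ici 0) (by simp))

lemma le_exp_sub_one_mul_deriv_zero {K : ℝ → ℝ} (hK : Differentiable ℝ K) (hK0 : K 0 = 0)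
    (hineq : ∀ x, (1 - Real.exp (-x)) * deriv K x ≤ K x) (x : ℝ) :
    K x ≤ (Real.exp x - 1) * deriv K 0 := by
  have hanti := antitone_dslope_div_dslope_exp hK hK0 hineq
  rcases lt_trichotomy x 0 with hx | rfl | hx
  · have h := hanti hx.le
    have hexp : Real.exp x - 1 < 0 := by rwa [sub_neg, Real.exp_lt_one_iff]
    simp only [dslope_same, dslope_of_ne _ hx.ne, slope_def_field, hK0, sub_zero, Real.exp_zero,
      Real.deriv_exp, div_one, div_div_div_cancel_right₀ hx.ne, le_div_iff_of_neg hexp] at h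
    linarith
  · simp [hK0]
  · have h := hanti hx.le
    have hexp : 0 < Real.exp x - 1 := by rwa [sub_pos, Real.one_lt_exp_iff]
    simp only [dslope_same, dslope_of_ne _ hx.ne', slope_def_field, hK0, sub_zero, Real.exp_zero,
      Real.deriv_exp, div_one, div_div_div_cancel_right₀ hx.ne', div_le_iff₀ hexp] at h
    linarith

lemma exp_sub_one_sub_le_mul {d : ℝ} (hd : d ∈ Set.Icc (0 : ℝ) 1) (x : ℝ) :
    Real.exp (d * x) - 1 - d * x ≤ d * (Real.exp x - 1 - x) := by
  have h := convexOn_exp.2 (Set.mem_univ (0 : ℝ)) (Set.mem_univ x) (sub_nonneg.2 hd.2) hd.1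
    (sub_add_cancel 1 d)
  simp only [smul_eq_mul, mul_zero, zero_add, Real.exp_zero, mul_one] at h
  linarith

lemma exp_neg_le_quadratic {l : ℝ} (hl : 0 ≤ l) : Real.exp (-l) ≤ 1 - l + l ^ 2 / 2 := by
  have hpos : 0 < 1 + l + l ^ 2 / 2 := by positivity
  rw [Real.exp_neg]
  calc (Real.exp l)⁻¹ ≤ (1 + l + l ^ 2 / 2)⁻¹ :=
        inv_anti₀ hpos (Real.quadratic_le_exp_of_nonneg hl)
    _ ≤ 1 - l + l ^ 2 / 2 := by
      rw [inv_le_iff_one_le_mul₀ hpos]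
      nlinarith [sq_nonneg (l ^ 2)]

lemma le_add_sqrt_of_le_add_sqrt_mul {E L z : ℝ} (hL : 0 ≤ L) (hz : 0 ≤ z)
    (h : E ≤ z + √(2 * L * E)) : E ≤ z + L + √(L ^ 2 + 2 * L * z) := by
  rcases le_total E z with hEz | hzE
  · linarith [Real.sqrt_nonneg (L ^ 2 + 2 * L * z)]
  · have hsq : (E - z) ^ 2 ≤ 2 * L * E :=
      (Real.le_sqrt (sub_nonneg.2 hzE) (mul_nonneg (by positivity) (hz.trans hzE))).1
        (sub_le_iff_le_add'.2 h)
    have hsqrt : E - z - L ≤ √(L ^ 2 + 2 * L * z) := Real.le_sqrt_of_sq_le (by linarith)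
    linarith

section Cgf

variable {Ω : Type*} [MeasurableSpace Ω] {h : Ω → ℝ} (P : Measure Ω) [IsProbabilityMeasure P]

open ProbabilityTheory

lemma BddMeasurable.integrableExpSet_eq_univ (hh : BddMeasurable h) :
    integrableExpSet h P = Set.univ :=
  Set.eq_univ_of_forall fun t => (hh.const_mul t).exp.integrable P

lemma BddMeasurable.differentiable_cgf (hh : BddMeasurable h) : Differentiable ℝ (cgf h P) :=
  fun t => (analyticAt_cgf (by simp [hh.integrableExpSet_eq_univ P])).differentiableAt

lemma BddMeasurable.mgf_mul_deriv_cgf (hh : BddMeasurable h) (l : ℝ) :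
    mgf h P l * deriv (cgf h P) l = ∫ ω, h ω * Real.exp (l * h ω) ∂P := by
  rw [deriv_cgf (by simp [hh.integrableExpSet_eq_univ P]), mul_div_cancel₀]
  exact (mgf_pos ((hh.const_mul l).exp.integrable P)).ne'

lemma BddMeasurable.entropy_exp (hh : BddMeasurable h) (l : ℝ) :
    entropy P (fun ω => Real.exp (l * h ω))
      = mgf h P l * (l * deriv (cgf h P) l - cgf h P l) := by
  have hlog : ∫ ω, Real.exp (l * h ω) * (l * h ω) ∂P = l * ∫ ω, h ω * Real.exp (l * h ω) ∂P := by
    rw [← integral_const_mul]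
    congr with ω
    ring
  rw [entropy]
  simp only [Real.log_exp, hlog, ← hh.mgf_mul_deriv_cgf P l]
  rw [← mgf, ← cgf]
  ring

end Cgf

namespace IsSelfBounding

open ProbabilityTheory

variable {m : ℕ} {X : Fin m → Type*} [∀ i, MeasurableSpace (X i)] {Z : (∀ i, X i) → ℝ}
  {V : Fin m → (∀ i, X i) → ℝ}

lemma nonneg (hZ : IsSelfBounding Z V) (S : ∀ i, X i) : 0 ≤ Z S :=
  (Finset.sum_nonneg fun i _ => sub_nonneg.2 (hZ.le i S)).trans (hZ.sum_sub_le S)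

lemma bddMeasurable_left (hZ : IsSelfBounding Z V) (i : Fin m) : BddMeasurable (V i) := by
  obtain ⟨C, hC⟩ := hZ.bddMeasurable.exists_abs_le
  refine ⟨hZ.measurable_left i, C + 1, fun S => abs_le.2 ⟨?_, ?_⟩⟩
  · linarith [hZ.le_add_one i S, (abs_le.1 (hC S)).1]
  · linarith [hZ.le i S, (abs_le.1 (hC S)).2]

lemma sum_logBregman_exp_le (hZ : IsSelfBounding Z V) (l : ℝ) (S : ∀ i, X i) :
    ∑ i, logBregman (Real.exp (l * Z S)) (Real.exp (l * V i S))
      ≤ (Real.exp (-l) + l - 1) * (Z S * Real.exp (l * Z S)) := by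
  have hφ : 0 ≤ Real.exp (-l) + l - 1 := by linarith [Real.add_one_le_exp (-l)]
  have hterm : ∀ i, logBregman (Real.exp (l * Z S)) (Real.exp (l * V i S))
      ≤ (Real.exp (-l) + l - 1) * Real.exp (l * Z S) * (Z S - V i S) := fun i => by
    have hconv := exp_sub_one_sub_le_mul
      ⟨sub_nonneg.2 (hZ.le i S), sub_le_iff_le_add'.2 (hZ.le_add_one i S)⟩ (-l)
    have hexp : Real.exp (l * V i S) = Real.exp (l * Z S) * Real.exp ((Z S - V i S) * -l) := by
      rw [← Real.exp_add]
      ring_nf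
    rw [logBregman, Real.log_exp, Real.log_exp, hexp]
    linear_combination Real.exp (l * Z S) * hconv
  calc ∑ i, logBregman (Real.exp (l * Z S)) (Real.exp (l * V i S))
    _ ≤ (Real.exp (-l) + l - 1) * Real.exp (l * Z S) * ∑ i, (Z S - V i S) := by
      rw [Finset.mul_sum]
      exact Finset.sum_le_sum fun i _ => hterm i
    _ ≤ (Real.exp (-l) + l - 1) * Real.exp (l * Z S) * Z S :=
      mul_le_mul_of_nonneg_left (hZ.sum_sub_le S) (mul_nonneg hφ (Real.exp_pos _).le)
    _ = (Real.exp (-l) + l - 1) * (Z S * Real.exp (l * Z S)) := by ring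

variable (μ : ∀ i, Measure (X i)) [∀ i, IsProbabilityMeasure (μ i)]

lemma entropy_exp_le (hZ : IsSelfBounding Z V) (l : ℝ) :
    entropy (Measure.pi μ) (fun S => Real.exp (l * Z S))
      ≤ (Real.exp (-l) + l - 1) * ∫ S, Z S * Real.exp (l * Z S) ∂(Measure.pi μ) := by
  have hT : PosBddMeasurable fun S => Real.exp (l * Z S) := (hZ.bddMeasurable.const_mul l).exp
  have hU : ∀ i, PosBddMeasurable fun S => Real.exp (l * V i S) := fun i =>
    ((hZ.bddMeasurable_left i).const_mul l).exp
  have hTU : ∀ i, Integrable (fun S => logBregman (Real.exp (l * Z S)) (Real.exp (l * V i S)))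
      (Measure.pi μ) := fun i => (BddMeasurable.logBregman hT (hU i)).integrable _
  refine (entropy_pi_le_sum_integral_logBregman μ hT hU fun i S x => ?_).trans ?_
  · rw [hZ.update_eq]
  · rw [← integral_finsetSum _ fun i _ => hTU i, ← integral_const_mul]
    exact integral_mono (integrable_finsetSum _ fun i _ => hTU i)
      (((hZ.bddMeasurable.mul hT.toBddMeasurable).const_mul _).integrable _)
      (hZ.sum_logBregman_exp_le l)

lemma one_sub_exp_neg_mul_deriv_cgf_le (hZ : IsSelfBounding Z V) (l : ℝ) :
    (1 - Real.exp (-l)) * deriv (cgf Z (Measure.pi μ)) l ≤ cgf Z (Measure.pi μ) l := by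
  have hent := hZ.entropy_exp_le μ l
  rw [hZ.bddMeasurable.entropy_exp (Measure.pi μ),
    ← hZ.bddMeasurable.mgf_mul_deriv_cgf (Measure.pi μ)] at hent
  have hmgf : 0 < mgf Z (Measure.pi μ) l :=
    mgf_pos ((hZ.bddMeasurable.const_mul l).exp.integrable _)
  refine le_of_mul_le_mul_left ?_ hmgf
  linarith

lemma cgf_le (hZ : IsSelfBounding Z V) (l : ℝ) :
    cgf Z (Measure.pi μ) l ≤ (Real.exp l - 1) * ∫ S, Z S ∂(Measure.pi μ) := by
  have hbound := le_exp_sub_one_mul_deriv_zero (hZ.bddMeasurable.differentiable_cgf (Measure.pi μ))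
    cgf_zero (hZ.one_sub_exp_neg_mul_deriv_cgf_le μ) l
  rwa [deriv_cgf_zero (by simp [hZ.bddMeasurable.integrableExpSet_eq_univ (Measure.pi μ)]),
    probReal_univ, div_one] at hbound

lemma measureReal_le_sub_le (hZ : IsSelfBounding Z V) (hE : 0 < ∫ S, Z S ∂(Measure.pi μ)) {t : ℝ}
    (ht : 0 ≤ t) :
    (Measure.pi μ).real {S | Z S ≤ ∫ S, Z S ∂(Measure.pi μ) - t}
      ≤ Real.exp (-(t ^ 2 / (2 * ∫ S, Z S ∂(Measure.pi μ)))) := by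
  have hcgf := fun l => hZ.cgf_le μ l
  set E := ∫ S, Z S ∂(Measure.pi μ)
  have hl : 0 ≤ t / E := div_nonneg ht hE.le
  refine (measure_le_le_exp_cgf (t := -(t / E)) (E - t) (neg_nonpos.2 hl)
    ((hZ.bddMeasurable.const_mul _).exp.integrable _)).trans (Real.exp_le_exp.2 ?_)
  calc -(-(t / E)) * (E - t) + cgf Z (Measure.pi μ) (-(t / E))
    _ ≤ t / E * (E - t) + (Real.exp (-(t / E)) - 1) * E := by
      rw [neg_neg]
      gcongr
      exact hcgf _
    _ ≤ t / E * (E - t) + (1 - t / E + (t / E) ^ 2 / 2 - 1) * E := by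
      gcongr
      exact exp_neg_le_quadratic hl
    _ = -(t ^ 2 / (2 * E)) := by
      field_simp
      ring

lemma measureReal_lt_sub_sqrt_le (hZ : IsSelfBounding Z V) {L : ℝ} (hL : 0 ≤ L) :
    (Measure.pi μ).real
        {S | Z S < ∫ S, Z S ∂(Measure.pi μ) - √(2 * L * ∫ S, Z S ∂(Measure.pi μ))}
      ≤ Real.exp (-L) := by
  have htail := fun hE t => hZ.measureReal_le_sub_le μ hE (t := t)
  have hE : 0 ≤ ∫ S, Z S ∂(Measure.pi μ) := integral_nonneg hZ.nonneg
  set E := ∫ S, Z S ∂(Measure.pi μ)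
  rcases hE.eq_or_lt with hE0 | hEpos
  · have hempty : {S | Z S < E - √(2 * L * E)} = ∅ :=
      Set.eq_empty_of_forall_notMem fun S hS => (hZ.nonneg S).not_gt (by simpa [← hE0] using hS)
    rw [hempty, measureReal_empty]
    exact (Real.exp_pos _).le
  · calc (Measure.pi μ).real {S | Z S < E - √(2 * L * E)}
      _ ≤ (Measure.pi μ).real {S | Z S ≤ E - √(2 * L * E)} :=
        measureReal_mono fun S (hS : Z S < E - √(2 * L * E)) => hS.le
      _ ≤ Real.exp (-(√(2 * L * E) ^ 2 / (2 * E))) := htail hEpos _ (Real.sqrt_nonneg _)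
      _ = Real.exp (-L) := by
        rw [Real.sq_sqrt (by positivity)]
        field_simp

lemma one_sub_le_measureReal_integral_le (hZ : IsSelfBounding Z V) {L : ℝ} (hL : 0 ≤ L) :
    1 - Real.exp (-L) ≤ (Measure.pi μ).real
      {S | ∫ S, Z S ∂(Measure.pi μ) ≤ Z S + L + √(L ^ 2 + 2 * L * Z S)} := by
  have htail := hZ.measureReal_lt_sub_sqrt_le μ hL
  set E := ∫ S, Z S ∂(Measure.pi μ)
  have hmeas : MeasurableSet {S | Z S < E - √(2 * L * E)} :=
    measurableSet_lt hZ.bddMeasurable.measurable measurable_const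
  calc 1 - Real.exp (-L)
    _ ≤ (Measure.pi μ).real {S | Z S < E - √(2 * L * E)}ᶜ := by
      rw [probReal_compl_eq_one_sub hmeas]
      linarith
    _ ≤ _ := measureReal_mono fun S hS =>
      le_add_sqrt_of_le_add_sqrt_mul hL (hZ.nonneg S) (sub_le_iff_le_add.1 (not_lt.1 hS))

end IsSelfBounding

end SelfBounding

section Rademacher

open scoped BigOperators

/-- The supremum over a family of vectors of their signed coordinate sums over `J`, with `true`
and `false` encoding the signs `1` and `-1` as in `sgnB`. -/
def signedSup {ι κ : Type*} (A : ι → κ → ℝ) (J : Finset κ) (σ : κ → Bool) : ℝ :=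
  ⨆ l, ∑ k ∈ J, sgnB (σ k) * A l k

/-- The unnormalized Rademacher average over the coordinates in `J` of a family of vectors, with
one sign for each coordinate in the ambient index type, so that different `J` share their signs. -/
def rademacherAvg {ι κ : Type*} [Fintype κ] [DecidableEq κ] (A : ι → κ → ℝ) (J : Finset κ) : ℝ :=
  𝔼 σ : κ → Bool, signedSup A J σ

variable {ι κ : Type*} {A : ι → κ → ℝ} {c : ℝ}

lemma sgnB_not (x : Bool) : sgnB (!x) = -sgnB x := by
  cases x <;> simp [sgnB]

lemma sgnB_mul_sub_le (hA : ∀ l l' k, A l k - A l' k ≤ 2 * c) (x : Bool) (l l' : ι) (k : κ) :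
    sgnB x * A l k - sgnB x * A l' k ≤ 2 * c := by
  cases x
  · simpa [sgnB, neg_add_eq_sub] using hA l' l k
  · simpa [sgnB] using hA l l' k

lemma bddAbove_range_signedSum [Nonempty ι] (hA : ∀ l l' k, A l k - A l' k ≤ 2 * c) (J : Finset κ)
    (σ : κ → Bool) : BddAbove (Set.range fun l => ∑ k ∈ J, sgnB (σ k) * A l k) := by
  obtain ⟨l₀⟩ := ‹Nonempty ι›
  refine ⟨∑ k ∈ J, (2 * c + sgnB (σ k) * A l₀ k), Set.forall_mem_range.2 fun l => ?_⟩
  exact Finset.sum_le_sum fun k _ => sub_le_iff_le_add.1 (sgnB_mul_sub_le hA (σ k) l l₀ k)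

variable [DecidableEq κ]

lemma sum_insert_sgnB_update_not (A : ι → κ → ℝ) {J : Finset κ} {i : κ} (hi : i ∉ J)
    (σ : κ → Bool) (l : ι) :
    ∑ k ∈ insert i J, sgnB (Function.update σ i (!σ i) k) * A l k
      = -(sgnB (σ i) * A l i) + ∑ k ∈ J, sgnB (σ k) * A l k := by
  rw [Finset.sum_insert hi, Function.update_self, sgnB_not, neg_mul]
  congr 1
  exact Finset.sum_congr rfl fun k hk => by
    rw [Function.update_of_ne (ne_of_mem_of_not_mem hk hi)]

lemma rademacherAvg_congr [Fintype κ] {B : ι → κ → ℝ} {J : Finset κ}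
    (hAB : ∀ l, ∀ k ∈ J, A l k = B l k) :
    rademacherAvg A J = rademacherAvg B J := by
  unfold rademacherAvg signedSup
  simp only [fun (σ : κ → Bool) l => Finset.sum_congr rfl fun k hk =>
    congrArg (sgnB (σ k) * ·) (hAB l k hk)]

lemma expect_update_not [Fintype κ] (i : κ) (g : (κ → Bool) → ℝ) :
    𝔼 σ, g (Function.update σ i (!σ i)) = 𝔼 σ, g σ :=
  Fintype.expect_equiv (Function.Involutive.toPerm (fun σ : κ → Bool => Function.update σ i (!σ i))
    fun σ => by simp) _ _ fun _ => rfl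

variable [Nonempty ι]

lemma two_mul_signedSup_le (hA : ∀ l l' k, A l k - A l' k ≤ 2 * c) {J : Finset κ} {i : κ}
    (hi : i ∉ J) (σ : κ → Bool) :
    2 * signedSup A J σ
      ≤ signedSup A (insert i J) σ + signedSup A (insert i J) (Function.update σ i (!σ i)) := by
  rw [signedSup, Real.mul_iSup_of_nonneg zero_le_two]
  refine ciSup_le fun l => ?_
  have hpos := le_ciSup (bddAbove_range_signedSum hA (insert i J) σ) l
  have hneg := le_ciSup (bddAbove_range_signedSum hA (insert i J) (Function.update σ i (!σ i))) l
  rw [Finset.sum_insert hi] at hpos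
  rw [sum_insert_sgnB_update_not A hi] at hneg
  unfold signedSup
  linarith

lemma signedSup_insert_add_le (hA : ∀ l l' k, A l k - A l' k ≤ 2 * c) {J : Finset κ} {i : κ}
    (hi : i ∉ J) (σ : κ → Bool) :
    signedSup A (insert i J) σ + signedSup A (insert i J) (Function.update σ i (!σ i))
      ≤ 2 * signedSup A J σ + 2 * c := by
  refine ciSup_add_ciSup_le fun l l' => ?_
  rw [Finset.sum_insert hi, sum_insert_sgnB_update_not A hi]
  have hl := le_ciSup (bddAbove_range_signedSum hA J σ) l
  have hl' := le_ciSup (bddAbove_range_signedSum hA J σ) l'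
  have hosc := sgnB_mul_sub_le hA (σ i) l l' i
  unfold signedSup
  linarith

lemma card_mul_signedSup_le (hA : ∀ l l' k, A l k - A l' k ≤ 2 * c) (J : Finset κ)
    (σ : κ → Bool) :
    J.card * signedSup A J σ ≤ ∑ i ∈ J, signedSup A (J.erase i) σ + signedSup A J σ := by
  nth_rewrite 1 [signedSup]
  rw [Real.mul_iSup_of_nonneg (Nat.cast_nonneg _)]
  refine ciSup_le fun l => ?_
  calc J.card * ∑ k ∈ J, sgnB (σ k) * A l k
    _ = ∑ i ∈ J, ∑ k ∈ J.erase i, sgnB (σ k) * A l k + ∑ k ∈ J, sgnB (σ k) * A l k := by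
      rw [← Finset.sum_add_distrib, Finset.sum_congr rfl fun i hi => Finset.sum_erase_add J
        (fun k => sgnB (σ k) * A l k) hi, Finset.sum_const, nsmul_eq_mul]
    _ ≤ ∑ i ∈ J, signedSup A (J.erase i) σ + signedSup A J σ :=
      add_le_add (Finset.sum_le_sum fun i _ => le_ciSup (bddAbove_range_signedSum hA _ σ) l)
        (le_ciSup (bddAbove_range_signedSum hA J σ) l)

variable [Fintype κ]

lemma rademacherAvg_le_insert (hA : ∀ l l' k, A l k - A l' k ≤ 2 * c) {J : Finset κ} {i : κ}
    (hi : i ∉ J) : rademacherAvg A J ≤ rademacherAvg A (insert i J) := by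
  have h := Finset.expect_le_expect (s := Finset.univ) fun σ _ => two_mul_signedSup_le hA hi σ
  rw [← Finset.mul_expect, Finset.expect_add_distrib,
    expect_update_not i (signedSup A (insert i J))] at h
  unfold rademacherAvg
  linarith

lemma rademacherAvg_insert_le_add (hA : ∀ l l' k, A l k - A l' k ≤ 2 * c) {J : Finset κ} {i : κ}
    (hi : i ∉ J) : rademacherAvg A (insert i J) ≤ rademacherAvg A J + c := by
  have h := Finset.expect_le_expect (s := Finset.univ) fun σ _ => signedSup_insert_add_le hA hi σ
  rw [Finset.expect_add_distrib, Finset.expect_add_distrib, ← Finset.mul_expect,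
    expect_update_not i (signedSup A (insert i J)), Fintype.expect_const] at h
  unfold rademacherAvg
  linarith

lemma rademacherAvg_mem_Icc (hA : ∀ l l' k, A l k - A l' k ≤ 2 * c) (J : Finset κ) :
    rademacherAvg A J ∈ Set.Icc 0 (J.card * c) := by
  induction J using Finset.induction_on with
  | empty => simp [rademacherAvg, signedSup]
  | insert i J hi ih =>
    rw [Finset.card_insert_of_notMem hi, Nat.cast_add_one, add_one_mul]
    exact ⟨ih.1.trans (rademacherAvg_le_insert hA hi),
      (rademacherAvg_insert_le_add hA hi).trans (add_le_add_left ih.2 c)⟩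

lemma sum_rademacherAvg_sub_erase_le (hA : ∀ l l' k, A l k - A l' k ≤ 2 * c) (J : Finset κ) :
    ∑ i ∈ J, (rademacherAvg A J - rademacherAvg A (J.erase i)) ≤ rademacherAvg A J := by
  have h := Finset.expect_le_expect (s := Finset.univ) fun σ _ => card_mul_signedSup_le hA J σ
  rw [← Finset.mul_expect, Finset.expect_add_distrib, Finset.expect_sum_comm] at h
  rw [Finset.sum_sub_distrib, Finset.sum_const, nsmul_eq_mul]
  unfold rademacherAvg
  linarith

end Rademacher

section EmpiricalRademacher

open scoped BigOperators

lemma measurable_rademacherAvg {ι κ Ω : Type*} [Countable ι] [Fintype κ] [DecidableEq κ]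
    [MeasurableSpace Ω] {A : Ω → ι → κ → ℝ} (hA : ∀ l k, Measurable fun ω => A ω l k)
    (J : Finset κ) : Measurable fun ω => rademacherAvg (A ω) J := by
  simp only [rademacherAvg, Fintype.expect_eq_sum_div_card]
  exact (Finset.measurable_fun_sum _ fun σ _ => .iSup fun l =>
    Finset.measurable_fun_sum _ fun k _ => (hA l k).const_mul _).div_const _

lemma isSelfBounding_rademacherAvg {ι : Type*} [Countable ι] [Nonempty ι] {m : ℕ}
    {X : Fin m → Type*} [∀ k, MeasurableSpace (X k)] {f : ι → ∀ k, X k → ℝ}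
    (hmeas : ∀ l k, Measurable (f l k)) {c : ℝ} (hc : 0 < c)
    (hosc : ∀ l l' k x, f l k x - f l' k x ≤ 2 * c) :
    IsSelfBounding (fun S => c⁻¹ * rademacherAvg (fun l k => f l k (S k)) Finset.univ)
      (fun i S => c⁻¹ * rademacherAvg (fun l k => f l k (S k)) (Finset.univ.erase i)) := by
  have hmeasAvg : ∀ J, Measurable fun S : ∀ k, X k => rademacherAvg (fun l k => f l k (S k)) J :=
    measurable_rademacherAvg fun l k => (hmeas l k).comp (measurable_pi_apply k)
  have hA : ∀ S : ∀ k, X k, ∀ l l' k, f l k (S k) - f l' k (S k) ≤ 2 * c := fun S l l' k =>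
    hosc l l' k (S k)
  have hbdd : BddMeasurable fun S : ∀ k, X k =>
      rademacherAvg (fun l k => f l k (S k)) Finset.univ :=
    ⟨hmeasAvg _, _, fun S =>
      have h := rademacherAvg_mem_Icc (hA S) Finset.univ
      (abs_of_nonneg h.1).trans_le h.2⟩
  refine ⟨hbdd.const_mul _, fun i => (hmeasAvg _).const_mul _, fun i S x => ?_, fun i S => ?_,
    fun i S => ?_, fun S => ?_⟩
  · congr 1
    exact rademacherAvg_congr fun l k hk => by
      rw [Function.update_of_ne (Finset.ne_of_mem_erase hk)]
  · have h := rademacherAvg_le_insert (hA S) (Finset.notMem_erase i Finset.univ)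
    rw [Finset.insert_erase (Finset.mem_univ i)] at h
    gcongr
  · have h := rademacherAvg_insert_le_add (hA S) (Finset.notMem_erase i Finset.univ)
    rw [Finset.insert_erase (Finset.mem_univ i)] at h
    rw [← inv_mul_cancel₀ hc.ne', ← mul_add]
    gcongr
  · simp only [← mul_sub, ← Finset.mul_sum]
    gcongr
    exact sum_rademacherAvg_sub_erase_le (hA S) Finset.univ

lemma integral_toMeasure_uniformOfFintype {α : Type*} [Fintype α] [Nonempty α]
    [MeasurableSpace α] [MeasurableSingletonClass α] (g : α → ℝ) :
    ∫ x, g x ∂(PMF.uniformOfFintype α).toMeasure = 𝔼 x, g x := by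
  simp [PMF.integral_eq_sum, Fintype.expect_eq_sum_div_card, Finset.mul_sum, div_eq_inv_mul]

lemma expect_comp_eval {κ α : Type*} [Fintype κ] [DecidableEq κ] [Fintype α] [Nonempty α]
    (g : α → ℝ) (j : κ) : 𝔼 σ : κ → α, g (σ j) = 𝔼 x, g x := by
  rw [Fintype.expect_equiv (Equiv.funSplitAt j α) (fun σ => g (σ j)) (fun p => g p.1)
    fun _ => rfl, ← Finset.univ_product_univ, Finset.expect_product]
  simp only [Fintype.expect_const]

lemma era_eq_inv_mul_rademacherAvg {X ι : Type*} (f : ι → X → ℝ) {n : ℕ} (hn : 0 < n) (m : ℕ)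
    (S : Fin m → X) :
    era f n m S = (m : ℝ)⁻¹ * rademacherAvg (fun l k => f l (S k)) Finset.univ := by
  have hmcera : ∀ σ, mcera f n m S σ
      = (n : ℝ)⁻¹ * ((m : ℝ)⁻¹ * ∑ j, signedSup (fun l k => f l (S k)) Finset.univ (σ j)) :=
    fun σ => by
      simp only [mcera, signedSup, Finset.mul_sum,
        Real.mul_iSup_of_nonneg (inv_nonneg.2 (Nat.cast_nonneg m))]
  rw [era, radMeasure, integral_toMeasure_uniformOfFintype]
  simp only [hmcera, ← Finset.mul_expect, Finset.expect_sum_comm, expect_comp_eval]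
  rw [Finset.sum_const, Finset.card_univ, Fintype.card_fin, nsmul_eq_mul, ← rademacherAvg]
  field_simp

lemma isSelfBounding_era {X ι : Type*} [MeasurableSpace X] [Countable ι] [Nonempty ι]
    {f : ι → X → ℝ} (hmeas : ∀ l, Measurable (f l)) {c : ℝ} (hc : 0 < c)
    (hosc : ∀ l l' x, f l x - f l' x ≤ 2 * c) {n : ℕ} (hn : 0 < n) {m : ℕ} (hm : 0 < m) :
    IsSelfBounding (fun S : Fin m → X => m / c * era f n m S)
      (fun i S => c⁻¹ * rademacherAvg (fun l k => f l (S k)) (Finset.univ.erase i)) := by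
  convert isSelfBounding_rademacherAvg (m := m) (fun l _ => hmeas l) hc
    (fun l l' _ => hosc l l') using 2 with S
  rw [era_eq_inv_mul_rademacherAvg f hn]
  field_simp

end EmpiricalRademacher

/-- Half of the oscillation of the family is enough for `c`: averaging over the sign of a
coordinate halves its influence on the supremum. -/
theorem stmt_2_general {X : Type*} [MeasurableSpace X] {ι : Type*} [Countable ι] [Nonempty ι]
    (f : ι → X → ℝ) {c : ℝ} (hc : 0 < c) (hmeas : ∀ l, Measurable (f l))
    (hosc : ∀ l l' x, f l x - f l' x ≤ 2 * c) (μ : Measure X) [IsProbabilityMeasure μ]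
    {n : ℕ} (hn : 0 < n) {m : ℕ} (hm : 0 < m) {δ : ℝ} (hδ : δ ∈ Set.Ioo (0 : ℝ) 1) :
    1 - δ ≤ (Measure.pi fun _ : Fin m => μ).real
      {S : Fin m → X | rc f n m μ ≤ era f n m S + c * Real.log (1 / δ) / m +
        √((c * Real.log (1 / δ) / m) ^ 2 + 2 * c * Real.log (1 / δ) * era f n m S / m)} := by
  have hm' : (0 : ℝ) < m := Nat.cast_pos.2 hm
  have hL : 0 ≤ Real.log (1 / δ) := Real.log_nonneg ((one_le_div hδ.1).2 hδ.2.le)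
  have hexp : Real.exp (-Real.log (1 / δ)) = δ := by
    rw [one_div, Real.log_inv, neg_neg, Real.exp_log hδ.1]
  have htail := (isSelfBounding_era hmeas hc hosc hn hm).one_sub_le_measureReal_integral_le
    (fun _ => μ) hL
  rw [hexp, integral_const_mul] at htail
  set L := Real.log (1 / δ)
  refine htail.trans (measureReal_mono fun S hS => ?_)
  have hsqrt : c / m * √(L ^ 2 + 2 * L * (m / c * era f n m S))
      = √((c * L / m) ^ 2 + 2 * c * L * era f n m S / m) := by
    rw [← Real.sqrt_sq (div_pos hc hm').le, ← Real.sqrt_mul (sq_nonneg _)]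
    field_simp
  calc rc f n m μ
    _ = c / m * (m / c * rc f n m μ) := by field_simp
    _ ≤ c / m * (m / c * era f n m S + L + √(L ^ 2 + 2 * L * (m / c * era f n m S))) :=
      mul_le_mul_of_nonneg_left hS (div_pos hc hm').le
    _ = era f n m S + c * L / m + √((c * L / m) ^ 2 + 2 * c * L * era f n m S / m) := by
      rw [mul_add, hsqrt]
      field_simp

theorem stmt_2 {X : Type*} [MeasurableSpace X] {ι : Type*} [Countable ι]
    (f : ι → X → ℝ) (a b : ℝ) (ha : a ≤ 0) (hb : 0 < b)
    (hmeas : ∀ l : ι, Measurable (f l))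
    (hrange : ∀ (l : ι) (x : X), f l x ∈ Set.Icc a b)
    (hzero : ∃ l₀ : ι, ∀ x : X, f l₀ x = 0)
    (μ : Measure X) [IsProbabilityMeasure μ] (m : ℕ) (hm : 0 < m)
    (δ : ℝ) (hδ : δ ∈ Set.Ioo (0 : ℝ) 1) :
    1 - δ ≤ ((Measure.pi fun _ : Fin m => μ)
        {S : Fin m → X | rc f 1 m μ ≤ era f 1 m S + (b - a) * Real.log (1 / δ) / m +
          Real.sqrt (((b - a) * Real.log (1 / δ) / m) ^ 2 +
            2 * (b - a) * Real.log (1 / δ) * era f 1 m S / m)}).toReal := by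
  have := hzero.nonempty
  exact stmt_2_general f (sub_pos.2 (ha.trans_lt hb)) hmeas (fun l l' x => by
    linarith [(hrange l x).1, (hrange l x).2, (hrange l' x).1]) μ one_pos hm hδ
end
end

section
/- Fix a sample S = (s_1,…,s_m) and assume ẑ(S) ≤ 1/2. Define g : {−1,1}^{n×m} → ℝ by g(σ) = n m R̂ⁿ_m(F,S,σ) = Σ_{j=1}^n sup_{f∈F} Σ_{i=1}^m σ_{j,i} f(s_i), and for each pair (j,i) define g_{j,i}(σ) as the infimum over σ'_{j,i} ∈ {−1,1} of g evaluated at σ with its (j,i)-entry replaced by σ'_{j,i}. Then for every σ ∈ {−1,1}^{n×m} and every (j,i): 0 ≤ g(σ) − g_{j,i}(σ) ≤ 1, and Σ_{j=1}^n Σ_{i=1}^m ( g(σ) − g_{j,i}(σ) ) ≤ g(σ) + n m ν̂_F(S). That is, g is a (1, n m ν̂_F(S))-self-bounding function. -/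
open MeasureTheory

noncomputable section

/-!
Since `g` is a sum over rows, `g(σ) - g_{j,i}(σ)` only involves the supremum of the `j`-th row.
For a single `f`, changing the sign `σ_{j,i}` lowers `Σ_k σ_{j,k} f(s_k)` by at most
`2 (σ_{j,i} f(s_i))⁺ = σ_{j,i} f(s_i) + |f(s_i)|`. Bounding this by `2 ẑ(S)` controls each
difference; summing it over `i` instead gives `Σ_i σ_{j,i} f(s_i) + Σ_i |f(s_i)|`, hence the bound
on the sum of the differences after taking suprema over `f`.
-/

open Function Set

section SignInf

variable {κ α : Type*} [DecidableEq κ] [LinearOrder α]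

/-- The infimum of `g` over the `i`-th sign, the other signs being those of `τ`: the analogue of
`gji` for functions of a single row of signs. -/
def signInf (g : (κ → Bool) → α) (τ : κ → Bool) (i : κ) : α :=
  min (g (update τ i true)) (g (update τ i false))

lemma le_signInf_iff {g : (κ → Bool) → α} {τ : κ → Bool} {i : κ} {c : α} :
    c ≤ signInf g τ i ↔ ∀ x, c ≤ g (update τ i x) := by
  rw [signInf, le_min_iff, Bool.forall_bool, and_comm]

lemma signInf_le (g : (κ → Bool) → α) (τ : κ → Bool) (i : κ) : signInf g τ i ≤ g τ := by
  simpa only [update_eq_self] using le_signInf_iff.1 (le_refl (signInf g τ i)) (τ i)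

end SignInf

lemma sum_apply_sub_sum_apply_update {κ M : Type*} [Fintype κ] [DecidableEq κ] [AddCommGroup M]
    {β : κ → Type*} (F : ∀ k, β k → M) (τ : ∀ k, β k) (i : κ) (x : β i) :
    ∑ k, F k (τ k) - ∑ k, F k (update τ i x k) = F i (τ i) - F i x := by
  rw [← Finset.sum_sub_distrib, Fintype.sum_eq_single i, update_self]
  intro k hk
  rw [update_of_ne hk, sub_self]

lemma bddAbove_range_sum {ι κ : Type*} [Fintype κ] {v : ι → κ → ℝ}
    (hv : BddAbove (range fun p : ι × κ => v p.1 p.2)) :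
    BddAbove (range fun l => ∑ k, v l k) := by
  obtain ⟨z, hz⟩ := hv
  refine ⟨Fintype.card κ • z, forall_mem_range.2 fun l => ?_⟩
  exact Finset.sum_le_card_nsmul _ _ _ fun k _ => hz ⟨(l, k), rfl⟩

lemma abs_sgnB_mul (x : Bool) (y : ℝ) : |sgnB x * y| = |y| := by
  cases x <;> simp [sgnB]

section RademacherSup

variable {ι κ : Type*} [Fintype κ]

/-- The supremum over `l` of the Rademacher sums `Σ_k τ_k u_{l,k}`: the contribution of one row
of signs to `gup` when `u l k = f l (S k)`. -/
def rademacherSup (u : ι → κ → ℝ) (τ : κ → Bool) : ℝ :=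
  ⨆ l, ∑ k, sgnB (τ k) * u l k

variable {u : ι → κ → ℝ}

lemma sum_sgnB_mul_le_rademacherSup (hu : BddAbove (range fun l => ∑ k, |u l k|))
    (τ : κ → Bool) (l : ι) : ∑ k, sgnB (τ k) * u l k ≤ rademacherSup u τ := by
  refine le_ciSup (f := fun l => ∑ k, sgnB (τ k) * u l k) (hu.range_mono _ fun l => ?_) l
  exact Finset.sum_le_sum fun k _ => (le_abs_self _).trans_eq (abs_sgnB_mul _ _)

variable [DecidableEq κ]

lemma sum_sgnB_mul_sub_le_update (w : κ → ℝ) (τ : κ → Bool) (i : κ) (x : Bool) :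
    ∑ k, sgnB (τ k) * w k - (sgnB (τ i) * w i + |w i|) ≤
      ∑ k, sgnB (update τ i x k) * w k := by
  have hdiff := sum_apply_sub_sum_apply_update (fun k y => sgnB y * w k) τ i x
  have hflip : -|w i| ≤ sgnB x * w i := abs_sgnB_mul x (w i) ▸ neg_abs_le _
  linarith

lemma sum_sgnB_mul_sub_le_signInf (hu : BddAbove (range fun l => ∑ k, |u l k|))
    (τ : κ → Bool) (i : κ) (l : ι) :
    ∑ k, sgnB (τ k) * u l k - (sgnB (τ i) * u l i + |u l i|) ≤ signInf (rademacherSup u) τ i :=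
  le_signInf_iff.2 fun x => (sum_sgnB_mul_sub_le_update (u l) τ i x).trans
    (sum_sgnB_mul_le_rademacherSup hu _ l)

variable [Nonempty ι]

lemma rademacherSup_sub_signInf_le (hu : BddAbove (range fun l => ∑ k, |u l k|))
    (τ : κ → Bool) {i : κ} {z : ℝ} (hz : ∀ l, |u l i| ≤ z) :
    rademacherSup u τ - signInf (rademacherSup u) τ i ≤ 2 * z := by
  refine sub_le_iff_le_add.2 (ciSup_le fun l => ?_)
  have hdrop := sum_sgnB_mul_sub_le_signInf hu τ i l
  have hsign : sgnB (τ i) * u l i ≤ |u l i| := abs_sgnB_mul (τ i) (u l i) ▸ le_abs_self _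
  linarith [hz l]

lemma sum_rademacherSup_sub_signInf_le (hu : BddAbove (range fun l => ∑ k, |u l k|))
    (τ : κ → Bool) :
    ∑ i, (rademacherSup u τ - signInf (rademacherSup u) τ i) ≤
      rademacherSup u τ + ⨆ l, ∑ k, |u l k| := by
  suffices hcard : Fintype.card κ * rademacherSup u τ ≤
      ∑ i, signInf (rademacherSup u) τ i + (rademacherSup u τ + ⨆ l, ∑ k, |u l k|) by
    rw [Finset.sum_sub_distrib, Finset.sum_const, Finset.card_univ, nsmul_eq_mul]
    linarith
  have hmul : Fintype.card κ * rademacherSup u τ =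
      ⨆ l, Fintype.card κ * ∑ k, sgnB (τ k) * u l k :=
    Real.mul_iSup_of_nonneg (Nat.cast_nonneg _) _
  refine hmul.trans_le (ciSup_le fun l => ?_)
  have hdrop := Finset.sum_le_sum fun i (_ : i ∈ Finset.univ) =>
    sum_sgnB_mul_sub_le_signInf hu τ i l
  rw [Finset.sum_sub_distrib, Finset.sum_add_distrib, Finset.sum_const, Finset.card_univ,
    nsmul_eq_mul] at hdrop
  linarith [sum_sgnB_mul_le_rademacherSup hu τ l, le_ciSup hu l]

end RademacherSup

section SampleClass

variable {X ι : Type*} (f : ι → X → ℝ) {n m : ℕ} (S : Fin m → X)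

lemma gup_eq_sum_rademacherSup (σ : Fin n → Fin m → Bool) :
    gup f S σ = ∑ j, rademacherSup (fun l k => f l (S k)) (σ j) :=
  rfl

lemma gup_update (σ : Fin n → Fin m → Bool) (j : Fin n) (τ : Fin m → Bool) :
    gup f S (update σ j τ) =
      gup f S σ - rademacherSup (fun l k => f l (S k)) (σ j) +
        rademacherSup (fun l k => f l (S k)) τ := by
  have hdiff := sum_apply_sub_sum_apply_update
    (fun _ => rademacherSup fun l k => f l (S k)) σ j τ
  rw [gup_eq_sum_rademacherSup, gup_eq_sum_rademacherSup]
  linarith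

lemma gup_sub_gji (σ : Fin n → Fin m → Bool) (j : Fin n) (i : Fin m) :
    gup f S σ - gji f S σ j i =
      rademacherSup (fun l k => f l (S k)) (σ j) -
        signInf (rademacherSup fun l k => f l (S k)) (σ j) i := by
  rw [gji, gup_update, gup_update, min_add_add_left, signInf]
  ring

lemma natCast_mul_nuhat : (m : ℝ) * nuhat f S = ⨆ l, ∑ k, |f l (S k)| := by
  -- For `m = 0` the factor `m * m⁻¹` is `0`, but then the supremum vanishes as well.
  rcases eq_or_ne m 0 with rfl | hm
  · simp
  · rw [nuhat, mul_inv_cancel_left₀ (Nat.cast_ne_zero.2 hm)]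

variable {f} in
lemma bddAbove_range_abs_of_mem_Icc {a b : ℝ} (hf : ∀ l x, f l x ∈ Icc a b) :
    BddAbove (range fun p : ι × Fin m => |f p.1 (S p.2)|) :=
  ⟨max |a| |b|, forall_mem_range.2 fun _ => abs_le_max_abs_abs (hf _ _).1 (hf _ _).2⟩

end SampleClass

theorem stmt_3_general {X ι : Type*} [Nonempty ι] (f : ι → X → ℝ) (n m : ℕ) (S : Fin m → X)
    (hf : BddAbove (range fun p : ι × Fin m => |f p.1 (S p.2)|)) :
    (∀ (σ : Fin n → Fin m → Bool) (j : Fin n) (i : Fin m),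
        0 ≤ gup f S σ - gji f S σ j i ∧ gup f S σ - gji f S σ j i ≤ 2 * zhat f S) ∧
    ∀ σ : Fin n → Fin m → Bool,
      ∑ j : Fin n, ∑ i : Fin m, (gup f S σ - gji f S σ j i) ≤
        gup f S σ + (n : ℝ) * (m : ℝ) * nuhat f S := by
  have hsum : BddAbove (range fun l => ∑ k, |f l (S k)|) := bddAbove_range_sum hf
  simp only [gup_sub_gji]
  refine ⟨fun σ j i => ⟨sub_nonneg.2 (signInf_le _ _ _), ?_⟩, fun σ => ?_⟩
  · exact rademacherSup_sub_signInf_le hsum (σ j) fun l => le_ciSup hf (l, i)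
  · calc _ ≤ ∑ j, (rademacherSup (fun l k => f l (S k)) (σ j) + ⨆ l, ∑ k, |f l (S k)|) :=
          Finset.sum_le_sum fun j _ => sum_rademacherSup_sub_signInf_le hsum (σ j)
      _ = gup f S σ + (n : ℝ) * (m : ℝ) * nuhat f S := by
          rw [Finset.sum_add_distrib, ← gup_eq_sum_rademacherSup, Finset.sum_const,
            Finset.card_fin, nsmul_eq_mul, mul_assoc, natCast_mul_nuhat]

theorem stmt_3 {X : Type*} [MeasurableSpace X] {ι : Type*} [Countable ι]
    (f : ι → X → ℝ) (a b : ℝ) (ha : a ≤ 0) (hb : 0 < b)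
    (hmeas : ∀ l : ι, Measurable (f l))
    (hrange : ∀ (l : ι) (x : X), f l x ∈ Set.Icc a b)
    (hzero : ∃ l₀ : ι, ∀ x : X, f l₀ x = 0)
    (n m : ℕ) (S : Fin m → X) (hzh : zhat f S ≤ 1 / 2) :
    (∀ (σ : Fin n → Fin m → Bool) (j : Fin n) (i : Fin m),
        0 ≤ gup f S σ - gji f S σ j i ∧ gup f S σ - gji f S σ j i ≤ 1) ∧
    ∀ σ : Fin n → Fin m → Bool,
      ∑ j : Fin n, ∑ i : Fin m, (gup f S σ - gji f S σ j i) ≤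
        gup f S σ + (n : ℝ) * (m : ℝ) * nuhat f S := by
  have : Nonempty ι := hzero.nonempty
  obtain ⟨hdiff, hsum⟩ := stmt_3_general f n m S (bddAbove_range_abs_of_mem_Icc S hrange)
  exact ⟨fun σ j i => ⟨(hdiff σ j i).1, (hdiff σ j i).2.trans (by linarith)⟩, hsum⟩
end
end
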